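/- Let f : ℝⁿ × ℝ^d → ℝⁿ be C¹, and let Λ : ℝ → ℝ^d be C¹ and exponentially bi-asymptotically constant with decay coefficient ρ > 0, with limits λ^± at ±∞. Fix r > 0 and α ∈ (0, ρ]. For every x₀ ∈ ℝⁿ, the characteristic polynomial of the Fréchet derivative of F_{r,α} (within ℝⁿ × [−1,1]) at (x₀, 1), regarded as a linear endomorphism of ℝⁿ × ℝ, equals the characteristic polynomial of the linear endomorphism (1/r)·D_x f(x₀, λ⁺) of ℝⁿ multiplied by the linear factor (X + α); similarly, at (x₀, −1) it equals the characteristic polynomial of (1/r)·D_x f(x₀, λ⁻) multiplied by (X − α). -/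

import Mathlib

open Filter Topology

/-- The time compactification map `g_α(τ) = tanh(ατ/2)`. -/
noncomputable def gcomp (α τ : ℝ) : ℝ := Real.tanh (α * τ / 2)

/-- Its inverse `h_α(s) = (1/α)·ln((1+s)/(1-s))`. -/
noncomputable def hcomp (α s : ℝ) : ℝ := (1 / α) * Real.log ((1 + s) / (1 - s))

/-- `Λ : ℝ → ℝ^d` is exponentially bi-asymptotically constant with decay coefficient `ρ`:
both limits `lim_{τ→+∞} Λ'(τ)·e^{ρτ}` and `lim_{τ→-∞} Λ'(τ)·e^{-ρτ}` exist. -/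
def ExpBiAsympConst {d : ℕ} (Λ : ℝ → Fin d → ℝ) (ρ : ℝ) : Prop :=
  (∃ Lp : Fin d → ℝ, Tendsto (fun τ => Real.exp (ρ * τ) • deriv Λ τ) atTop (𝓝 Lp)) ∧
  (∃ Lm : Fin d → ℝ, Tendsto (fun τ => Real.exp (-ρ * τ) • deriv Λ τ) atBot (𝓝 Lm))

/-- The compactified input `Λ_α : [-1,1] → ℝ^d`, equal to `Λ ∘ h_α` on `(-1,1)` and to the
future/past limits `lp`, `lm` at `s = 1`, `s = -1` respectively. -/
noncomputable def compInput {d : ℕ} (Λ : ℝ → Fin d → ℝ) (lp lm : Fin d → ℝ)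
    (α s : ℝ) : Fin d → ℝ :=
  if s = 1 then lp else if s = -1 then lm else Λ (hcomp α s)

/-- The compactified vector field `F_{r,α}(x,s) = (f(x,Λ_α(s))/r, α(1-s²)/2)` on `ℝⁿ × [-1,1]`. -/
noncomputable def compField {n d : ℕ} (f : (Fin n → ℝ) × (Fin d → ℝ) → Fin n → ℝ)
    (Λ : ℝ → Fin d → ℝ) (lp lm : Fin d → ℝ) (r α : ℝ) :
    (Fin n → ℝ) × ℝ → (Fin n → ℝ) × ℝ :=
  fun p => (r⁻¹ • f (p.1, compInput Λ lp lm α p.2), α * (1 - p.2 ^ 2) / 2)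

/-- The extended phase space `ℝⁿ × [-1,1]`. -/
def compDomain (n : ℕ) : Set ((Fin n → ℝ) × ℝ) := Set.univ ×ˢ Set.Icc (-1) 1

/-!
In the block decomposition of `ℝⁿ × ℝ` the derivative of `F_{r,α}` is upper triangular, because its
second component does not depend on `x`; its diagonal blocks are `(1/r) D_x f` and the derivative
`-αs` of `α(1 - s²)/2`. The only issue is the differentiability of `Λ_α` at `s = ±1`. Since
`exp (α h_α(s)) = (1 + s)/(1 - s)`, on the interior
`Λ_α'(s) = 2 / (α (1 + s)²) · exp (α τ) Λ'(τ)` with `τ = h_α(s)`, which converges as `s → 1`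
because `α ≤ ρ`. A continuous function whose derivative has a limit at an endpoint is
differentiable there. The endpoint `s = -1` follows by reversing time.
-/

section CharacteristicPolynomial

open Polynomial

variable {R M N : Type*} [CommRing R] [AddCommGroup M] [Module R M] [Module.Free R M]
  [Module.Finite R M] [AddCommGroup N] [Module R N] [Module.Free R N] [Module.Finite R N]

theorem charpoly_coprod_prod_comp_snd (A : Module.End R M) (B : N →ₗ[R] M) (D : Module.End R N) :
    ((A.coprod B).prod (D ∘ₗ LinearMap.snd R M N)).charpoly = A.charpoly * D.charpoly := by
  let bM := Module.Free.chooseBasis R M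
  let bN := Module.Free.chooseBasis R N
  have toMatrix_eq : LinearMap.toMatrix (bM.prod bN) (bM.prod bN)
      ((A.coprod B).prod (D ∘ₗ LinearMap.snd R M N)) =
      Matrix.fromBlocks (A.toMatrix bM bM) (B.toMatrix bN bM) 0 (D.toMatrix bN bN) := by
    ext (i | i) (j | j) <;> simp [LinearMap.toMatrix_apply]
  rw [← LinearMap.charpoly_toMatrix _ (bM.prod bN), toMatrix_eq,
    Matrix.charpoly_fromBlocks_zero₂₁, LinearMap.charpoly_toMatrix, LinearMap.charpoly_toMatrix]

theorem charpoly_end_self (g : Module.End R R) : g.charpoly = X - C (g 1) := by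
  rw [← LinearMap.charpoly_toMatrix g (Module.Basis.singleton Unit R)]
  simp [Matrix.charpoly, LinearMap.toMatrix_apply]

end CharacteristicPolynomial

theorem hasFDerivWithinAt_prodMk_comp_snd {𝕜 E F G H K : Type*} [NontriviallyNormedField 𝕜]
    [NormedAddCommGroup E] [NormedSpace 𝕜 E] [NormedAddCommGroup F] [NormedSpace 𝕜 F]
    [NormedAddCommGroup G] [NormedSpace 𝕜 G] [NormedAddCommGroup H] [NormedSpace 𝕜 H]
    [NormedAddCommGroup K] [NormedSpace 𝕜 K]
    {f : E × F → G} {f' : E × F →L[𝕜] G} {γ : H → F} {γ' : H →L[𝕜] F} {g : H → K}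
    {g' : H →L[𝕜] K} {S : Set H} {x : E} {s : H} (hf : HasFDerivAt f f' (x, γ s))
    (hγ : HasFDerivWithinAt γ γ' S s) (hg : HasFDerivWithinAt g g' S s) :
    HasFDerivWithinAt (fun p : E × H => (f (p.1, γ p.2), g p.2))
      (((f' ∘L .inl 𝕜 E F).coprod (f' ∘L .inr 𝕜 E F ∘L γ')).prod (g' ∘L .snd 𝕜 E H))
      (Set.univ ×ˢ S) (x, s) := by
  have mapsTo_snd : Set.MapsTo Prod.snd (Set.univ ×ˢ S : Set (E × H)) S := fun _ hp => hp.2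
  have hγ_snd := hγ.comp (x, s) hasFDerivWithinAt_snd mapsTo_snd
  have hg_snd := hg.comp (x, s) hasFDerivWithinAt_snd mapsTo_snd
  have hf_comp := hf.comp_hasFDerivWithinAt (x, s) (hasFDerivWithinAt_fst.prodMk hγ_snd)
  refine (hf_comp.prodMk hg_snd).congr_fderiv ?_
  congr 1
  ext <;> simp

section TimeCompactification

variable {F : Type*} [NormedAddCommGroup F] [NormedSpace ℝ F] {α ρ s : ℝ}

theorem hcomp_neg (α s : ℝ) : hcomp α (-s) = -hcomp α s := by
  unfold hcomp
  rw [← mul_neg, ← Real.log_inv, inv_div, sub_neg_eq_add, ← sub_eq_add_neg]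

theorem exp_mul_hcomp (hα : α ≠ 0) (hs : s ∈ Set.Ioo (-1) 1) :
    Real.exp (α * hcomp α s) = (1 + s) / (1 - s) := by
  have h_pos : 0 < (1 + s) / (1 - s) := div_pos (by linarith [hs.1]) (by linarith [hs.2])
  rw [hcomp, ← mul_assoc, mul_one_div_cancel hα, one_mul, Real.exp_log h_pos]

theorem tendsto_hcomp_nhdsLT_one (hα : 0 < α) : Tendsto (hcomp α) (𝓝[<] 1) atTop := by
  have h_num : Tendsto (fun s : ℝ => 1 + s) (𝓝[<] 1) (𝓝 (1 + 1)) :=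
    (continuous_const_add 1).continuousWithinAt
  have h_den : Tendsto (fun s : ℝ => 1 - s) (𝓝[<] 1) (𝓝[>] 0) := by
    refine tendsto_nhdsWithin_iff.2 ⟨?_, ?_⟩
    · exact (sub_self (1 : ℝ)) ▸ (continuous_sub_left (1 : ℝ)).continuousWithinAt
    · filter_upwards [self_mem_nhdsWithin] with s hs using sub_pos.2 (Set.mem_Iio.1 hs)
  have h_quot : Tendsto (fun s : ℝ => (1 + s) / (1 - s)) (𝓝[<] 1) atTop :=
    h_num.pos_mul_atTop (by norm_num) h_den.inv_tendsto_nhdsGT_zero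
  exact (Real.tendsto_log_atTop.comp h_quot).const_mul_atTop (one_div_pos.2 hα)

theorem hasDerivAt_hcomp (α : ℝ) (hs : s ∈ Set.Ioo (-1) 1) :
    HasDerivAt (hcomp α) (1 / α * (2 / (1 - s ^ 2))) s := by
  have h_num : 1 + s ≠ 0 := by linarith [hs.1]
  have h_den : 1 - s ≠ 0 := by linarith [hs.2]
  have h_quot := ((hasDerivAt_id s).const_add 1).div ((hasDerivAt_id s).const_sub 1) h_den
  refine ((h_quot.log (div_ne_zero h_num h_den)).const_mul (1 / α)).congr_deriv ?_
  have h_sq : 1 - s ^ 2 = (1 + s) * (1 - s) := by ring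
  rw [h_sq]
  simp only [id, Pi.div_apply]
  field_simp
  ring

-- `h_α' = 2 / (α (1 - s²))` blows up at `s = 1` exactly as fast as `exp (α h_α) = (1+s)/(1-s)`.
theorem hasDerivAt_comp_hcomp {Λ : ℝ → F} {Λ' : F} (hα : α ≠ 0) (hs : s ∈ Set.Ioo (-1) 1)
    (hΛ : HasDerivAt Λ Λ' (hcomp α s)) :
    HasDerivAt (Λ ∘ hcomp α)
      ((2 / (α * (1 + s) ^ 2)) • Real.exp (α * hcomp α s) • Λ') s := by
  have h_num : 1 + s ≠ 0 := by linarith [hs.1]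
  have h_den : 1 - s ≠ 0 := by linarith [hs.2]
  have h_sq : 1 - s ^ 2 = (1 + s) * (1 - s) := by ring
  refine (hΛ.scomp s (hasDerivAt_hcomp α hs)).congr_deriv ?_
  rw [smul_smul, exp_mul_hcomp hα hs, h_sq]
  congr 1
  field_simp

theorem exists_tendsto_exp_smul_of_le {ι : Type*} {l : Filter ι} {u : ι → ℝ} {G : ι → F}
    (hu : Tendsto u l atTop) (hαρ : α ≤ ρ)
    (hG : ∃ L, Tendsto (fun i => Real.exp (ρ * u i) • G i) l (𝓝 L)) :
    ∃ L, Tendsto (fun i => Real.exp (α * u i) • G i) l (𝓝 L) := by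
  obtain rfl | hlt := hαρ.eq_or_lt
  · exact hG
  obtain ⟨L, hL⟩ := hG
  have h_decay : Tendsto (fun i => Real.exp ((α - ρ) * u i)) l (𝓝 0) :=
    Real.tendsto_exp_atBot.comp (hu.const_mul_atTop_of_neg (sub_neg.2 hlt))
  refine ⟨(0 : ℝ) • L, (h_decay.smul hL).congr fun i => ?_⟩
  rw [smul_smul, ← Real.exp_add, ← add_mul, sub_add_cancel]

end TimeCompactification

theorem ExpBiAsympConst.of_le {d : ℕ} {Λ : ℝ → Fin d → ℝ} {α ρ : ℝ}
    (hΛ : ExpBiAsympConst Λ ρ) (hαρ : α ≤ ρ) : ExpBiAsympConst Λ α := by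
  refine ⟨exists_tendsto_exp_smul_of_le tendsto_id hαρ hΛ.1, ?_⟩
  simpa only [mul_neg, neg_mul] using
    exists_tendsto_exp_smul_of_le tendsto_neg_atBot_atTop hαρ
      (by simpa only [mul_neg, neg_mul] using hΛ.2)

section CompactifiedInput

variable {d : ℕ} {Λ : ℝ → Fin d → ℝ} {lp lm L : Fin d → ℝ} {α : ℝ}

theorem compInput_one (Λ : ℝ → Fin d → ℝ) (lp lm : Fin d → ℝ) (α : ℝ) :
    compInput Λ lp lm α 1 = lp :=
  if_pos rfl

theorem compInput_neg (Λ : ℝ → Fin d → ℝ) (lp lm : Fin d → ℝ) (α s : ℝ) :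
    compInput Λ lp lm α (-s) = compInput (fun τ => Λ (-τ)) lm lp α s := by
  unfold compInput
  rw [hcomp_neg]
  split_ifs <;> first | rfl | (exfalso; grind)

theorem compInput_neg_one (Λ : ℝ → Fin d → ℝ) (lp lm : Fin d → ℝ) (α : ℝ) :
    compInput Λ lp lm α (-1) = lm := by
  rw [compInput_neg, compInput_one]

theorem eqOn_compInput_Ioo (Λ : ℝ → Fin d → ℝ) (lp lm : Fin d → ℝ) (α : ℝ) :
    Set.EqOn (compInput Λ lp lm α) (Λ ∘ hcomp α) (Set.Ioo (-1) 1) := fun s hs => by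
  rw [compInput, if_neg hs.2.ne, if_neg hs.1.ne', Function.comp_apply]

theorem hasDerivAt_compInput {Λ' : Fin d → ℝ} {s : ℝ} (hα : α ≠ 0) (hs : s ∈ Set.Ioo (-1) 1)
    (hΛ : HasDerivAt Λ Λ' (hcomp α s)) (lp lm : Fin d → ℝ) :
    HasDerivAt (compInput Λ lp lm α)
      ((2 / (α * (1 + s) ^ 2)) • Real.exp (α * hcomp α s) • Λ') s :=
  (hasDerivAt_comp_hcomp hα hs hΛ).congr_of_eventuallyEq <|
    (eqOn_compInput_Ioo Λ lp lm α).eventuallyEq_of_mem (isOpen_Ioo.mem_nhds hs)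

theorem tendsto_compInput_nhdsLT_one (hα : 0 < α) (hp : Tendsto Λ atTop (𝓝 lp))
    (lm : Fin d → ℝ) : Tendsto (compInput Λ lp lm α) (𝓝[<] 1) (𝓝 lp) :=
  (hp.comp (tendsto_hcomp_nhdsLT_one hα)).congr' <|
    (eqOn_compInput_Ioo Λ lp lm α).symm.eventuallyEq_of_mem (Ioo_mem_nhdsLT (by norm_num))

theorem hasDerivWithinAt_compInput_one (hα : 0 < α)
    (hΛ : ∀ᶠ τ in atTop, DifferentiableAt ℝ Λ τ) (hp : Tendsto Λ atTop (𝓝 lp))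
    (hL : Tendsto (fun τ => Real.exp (α * τ) • deriv Λ τ) atTop (𝓝 L)) (lm : Fin d → ℝ) :
    HasDerivWithinAt (compInput Λ lp lm α) ((2 * α)⁻¹ • L) (Set.Iic 1) 1 := by
  have hh := tendsto_hcomp_nhdsLT_one hα
  let S : Set ℝ := {s | s ∈ Set.Ioo (-1) 1 ∧ DifferentiableAt ℝ Λ (hcomp α s)}
  have hS : S ∈ 𝓝[<] (1 : ℝ) := inter_mem (Ioo_mem_nhdsLT (by norm_num)) (hh.eventually hΛ)
  have h_deriv : ∀ s ∈ S, HasDerivAt (compInput Λ lp lm α) _ s := fun s hs =>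
    hasDerivAt_compInput hα.ne' hs.1 hs.2.hasDerivAt lp lm
  have h_factor : Tendsto (fun s : ℝ => 2 / (α * (1 + s) ^ 2)) (𝓝[<] 1) (𝓝 (2 * α)⁻¹) := by
    have h_cont : ContinuousAt (fun s : ℝ => 2 / (α * (1 + s) ^ 2)) 1 := by
      fun_prop (disch := positivity)
    have h_value : 2 / (α * (1 + 1) ^ 2) = (2 * α)⁻¹ := by field_simp; norm_num
    exact h_value ▸ h_cont.continuousWithinAt
  have h_lim : Tendsto (deriv (compInput Λ lp lm α)) (𝓝[<] 1) (𝓝 ((2 * α)⁻¹ • L)) :=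
    (h_factor.smul (hL.comp hh)).congr' <|
      mem_of_superset hS fun s hs => (h_deriv s hs).deriv.symm
  have h_cont : ContinuousWithinAt (compInput Λ lp lm α) S 1 := by
    rw [ContinuousWithinAt, compInput_one]
    exact (tendsto_compInput_nhdsLT_one hα hp lm).mono_left
      (nhdsWithin_mono _ fun s hs => hs.1.2)
  exact hasDerivWithinAt_Iic_of_tendsto_deriv
    (fun s hs => (h_deriv s hs).differentiableAt.differentiableWithinAt) h_cont hS h_lim

theorem hasDerivWithinAt_compInput_neg_one (hα : 0 < α)
    (hΛ : ∀ᶠ τ in atBot, DifferentiableAt ℝ Λ τ) (hm : Tendsto Λ atBot (𝓝 lm))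
    (hL : Tendsto (fun τ => Real.exp (-α * τ) • deriv Λ τ) atBot (𝓝 L)) (lp : Fin d → ℝ) :
    HasDerivWithinAt (compInput Λ lp lm α) ((2 * α)⁻¹ • L) (Set.Ici (-1)) (-1) := by
  have h_reflected : HasDerivWithinAt (compInput (fun τ => Λ (-τ)) lm lp α)
      ((2 * α)⁻¹ • -L) (Set.Iic 1) (-(-1)) := by
    rw [neg_neg]
    refine hasDerivWithinAt_compInput_one (Λ := fun τ => Λ (-τ)) hα ?_
      (hm.comp tendsto_neg_atTop_atBot) ?_ lp
    · filter_upwards [tendsto_neg_atTop_atBot.eventually hΛ] with τ hτ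
      exact hτ.comp τ differentiableAt_id.neg
    · refine (hL.comp tendsto_neg_atTop_atBot).neg.congr fun τ => ?_
      simp only [Function.comp_apply, neg_mul_neg, deriv_comp_neg, smul_neg]
  have h_comp := h_reflected.scomp (-1 : ℝ) (hasDerivAt_neg (-1 : ℝ)).hasDerivWithinAt
    fun s (hs : -1 ≤ s) => neg_le.1 hs
  refine (h_comp.congr_deriv (by simp)).congr ?_ ?_ <;>
    simp [← compInput_neg]

end CompactifiedInput

section CompactifiedField

open Polynomial

variable {n d : ℕ} {f : (Fin n → ℝ) × (Fin d → ℝ) → Fin n → ℝ} {Λ : ℝ → Fin d → ℝ}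
  {lp lm l v : Fin d → ℝ} {α s : ℝ} {x₀ : Fin n → ℝ}

theorem hasFDerivWithinAt_compField {f' : (Fin n → ℝ) × (Fin d → ℝ) →L[ℝ] Fin n → ℝ}
    (hf : HasFDerivAt f f' (x₀, compInput Λ lp lm α s))
    (hΛ : HasDerivWithinAt (compInput Λ lp lm α) v (Set.Icc (-1) 1) s) (r : ℝ) :
    HasFDerivWithinAt (compField f Λ lp lm r α)
      ((((r⁻¹ • f') ∘L .inl ℝ _ _).coprod
        ((r⁻¹ • f') ∘L .inr ℝ _ _ ∘L .toSpanSingleton ℝ v)).prod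
        (.toSpanSingleton ℝ (-(α * s)) ∘L .snd ℝ _ _)) (compDomain n) (x₀, s) := by
  have h_time : HasDerivAt (fun t : ℝ => α * (1 - t ^ 2) / 2) (-(α * s)) s := by
    refine (((((hasDerivAt_id s).pow 2).const_sub 1).const_mul α).div_const 2).congr_deriv ?_
    simp only [id]
    ring
  exact hasFDerivWithinAt_prodMk_comp_snd (hf.const_smul r⁻¹) hΛ.hasFDerivWithinAt
    h_time.hasDerivWithinAt.hasFDerivWithinAt

theorem exists_hasFDerivWithinAt_compField_charpoly_eq
    (hl : compInput Λ lp lm α s = l) (hf : DifferentiableAt ℝ f (x₀, l))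
    (hΛ : DifferentiableWithinAt ℝ (compInput Λ lp lm α) (Set.Icc (-1) 1) s) (r : ℝ) :
    ∃ L : ((Fin n → ℝ) × ℝ) →L[ℝ] ((Fin n → ℝ) × ℝ),
      HasFDerivWithinAt (compField f Λ lp lm r α) L (compDomain n) (x₀, s) ∧
      L.toLinearMap.charpoly =
        ((1 / r) • fderiv ℝ (fun x => f (x, l)) x₀).toLinearMap.charpoly * (X + C (α * s)) := by
  subst hl
  refine ⟨_, hasFDerivWithinAt_compField hf.hasFDerivAt hΛ.hasDerivWithinAt r, ?_⟩
  have h_partial : fderiv ℝ (fun x => f (x, compInput Λ lp lm α s)) x₀ =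
      fderiv ℝ f (x₀, compInput Λ lp lm α s) ∘L .inl ℝ _ _ :=
    (hf.hasFDerivAt.comp x₀ (hasFDerivAt_prodMk_left x₀ _)).fderiv
  have h_time : (ContinuousLinearMap.toSpanSingleton ℝ (-(α * s))).toLinearMap.charpoly =
      X + C (α * s) := by
    simp [charpoly_end_self]
  rw [h_partial, one_div, ← h_time]
  exact charpoly_coprod_prod_comp_snd _ _ _

end CompactifiedField

open Polynomial in
theorem stmt7_general {n d : ℕ} {f : (Fin n → ℝ) × (Fin d → ℝ) → Fin n → ℝ}
    {Λ : ℝ → Fin d → ℝ} {lp lm : Fin d → ℝ} {r α : ℝ} {x₀ : Fin n → ℝ}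
    (hfp : DifferentiableAt ℝ f (x₀, lp)) (hfm : DifferentiableAt ℝ f (x₀, lm))
    (hΛp : ∀ᶠ τ in atTop, DifferentiableAt ℝ Λ τ) (hΛm : ∀ᶠ τ in atBot, DifferentiableAt ℝ Λ τ)
    (hbac : ExpBiAsympConst Λ α)
    (hp : Tendsto Λ atTop (𝓝 lp)) (hm : Tendsto Λ atBot (𝓝 lm))
    (_hr : r ≠ 0) (hα : 0 < α) :
    (∃ L : ((Fin n → ℝ) × ℝ) →L[ℝ] ((Fin n → ℝ) × ℝ),
      HasFDerivWithinAt (compField f Λ lp lm r α) L (compDomain n) (x₀, 1) ∧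
      L.toLinearMap.charpoly =
        ((1 / r) • fderiv ℝ (fun x => f (x, lp)) x₀).toLinearMap.charpoly *
          (X + C α)) ∧
    (∃ L : ((Fin n → ℝ) × ℝ) →L[ℝ] ((Fin n → ℝ) × ℝ),
      HasFDerivWithinAt (compField f Λ lp lm r α) L (compDomain n) (x₀, -1) ∧
      L.toLinearMap.charpoly =
        ((1 / r) • fderiv ℝ (fun x => f (x, lm)) x₀).toLinearMap.charpoly *
          (X - C α)) := by
  obtain ⟨⟨Lp, hLp⟩, Lm, hLm⟩ := hbac
  have h_one : DifferentiableWithinAt ℝ (compInput Λ lp lm α) (Set.Icc (-1) 1) 1 :=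
    (hasDerivWithinAt_compInput_one hα hΛp hp hLp lm).differentiableWithinAt.mono
      Set.Icc_subset_Iic_self
  have h_neg_one : DifferentiableWithinAt ℝ (compInput Λ lp lm α) (Set.Icc (-1) 1) (-1) :=
    (hasDerivWithinAt_compInput_neg_one hα hΛm hm hLm lp).differentiableWithinAt.mono
      Set.Icc_subset_Ici_self
  constructor
  · simpa only [mul_one] using
      exists_hasFDerivWithinAt_compField_charpoly_eq (compInput_one Λ lp lm α) hfp h_one r
  · simpa only [mul_neg, mul_one, C_neg, ← sub_eq_add_neg] using
      exists_hasFDerivWithinAt_compField_charpoly_eq (compInput_neg_one Λ lp lm α) hfm h_neg_one r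

open Polynomial in
/-- For `r > 0` and `α ∈ (0,ρ]`, the characteristic polynomial of the Fréchet
derivative of `F_{r,α}` within `ℝⁿ × [-1,1]` at `(x₀,1)` equals the characteristic polynomial
of `(1/r)·D_x f(x₀, λ⁺)` times `(X + α)`, and at `(x₀,-1)` it equals the characteristic
polynomial of `(1/r)·D_x f(x₀, λ⁻)` times `(X - α)`. -/
theorem stmt7 {n d : ℕ} (f : (Fin n → ℝ) × (Fin d → ℝ) → Fin n → ℝ)
    (hf : ContDiff ℝ 1 f)
    (Λ : ℝ → Fin d → ℝ) (ρ : ℝ) (hρ : 0 < ρ)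
    (hΛ : ContDiff ℝ 1 Λ) (hbac : ExpBiAsympConst Λ ρ)
    (lp lm : Fin d → ℝ)
    (hp : Tendsto Λ atTop (𝓝 lp)) (hm : Tendsto Λ atBot (𝓝 lm))
    (r α : ℝ) (hr : 0 < r) (hα : α ∈ Set.Ioc 0 ρ) :
    ∀ x₀ : Fin n → ℝ,
      (∃ L : ((Fin n → ℝ) × ℝ) →L[ℝ] ((Fin n → ℝ) × ℝ),
        HasFDerivWithinAt (compField f Λ lp lm r α) L (compDomain n) (x₀, 1) ∧
        L.toLinearMap.charpoly =
          ((1 / r) • fderiv ℝ (fun x => f (x, lp)) x₀).toLinearMap.charpoly *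
            (X + C α)) ∧
      (∃ L : ((Fin n → ℝ) × ℝ) →L[ℝ] ((Fin n → ℝ) × ℝ),
        HasFDerivWithinAt (compField f Λ lp lm r α) L (compDomain n) (x₀, -1) ∧
        L.toLinearMap.charpoly =
          ((1 / r) • fderiv ℝ (fun x => f (x, lm)) x₀).toLinearMap.charpoly *
            (X - C α)) := by
  intro x₀
  exact stmt7_general (hf.differentiable one_ne_zero _) (hf.differentiable one_ne_zero _)
    (.of_forall (hΛ.differentiable one_ne_zero)) (.of_forall (hΛ.differentiable one_ne_zero))
    (hbac.of_le hα.2) hp hm hr.ne' hα.1
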